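/- arXiv:1302.4885 — 3 statements merged into one kernel-verified Lean document; each statement's English description precedes it below -/
import Mathlib

section
/- For every z ∈ ℂ with Im z > 0, the Cauchy transform of the logistic distribution satisfies ∫_ℝ (π/(2 cosh²(πx)))/(z − x) dx = Σ_{n=1}^∞ i/(z + (n − 1/2)i)², where the series converges absolutely. -/
open MeasureTheory Filter Topology

lemma csc_aux (w : ℂ) (hw : 0 < w.im) :
    ∑' n : ℤ, 1 / (w + n) ^ 2 = (Real.pi : ℂ) ^ 2 / Complex.sin (Real.pi * w) ^ 2 := by
  have hw' : w ∈ {z : ℂ | 0 < z.im} := hw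
  have h := iteratedDerivWithin_cot_pi_mul_eq_mul_tsum_div_pow (k := 1) le_rfl hw'
  have ho : IsOpen {z : ℂ | 0 < z.im} := isOpen_lt continuous_const Complex.continuous_im
  have hs : Complex.sin (Real.pi * w) ≠ 0 := by
    apply sin_pi_mul_ne_zero
    rintro ⟨n, rfl⟩
    simp at hw
  rw [iteratedDerivWithin_one, derivWithin_of_isOpen ho hw'] at h
  have hd : HasDerivAt (fun x : ℂ => (Real.pi : ℂ) * Complex.cot (Real.pi * x))
      (-((Real.pi : ℂ) ^ 2 / Complex.sin (Real.pi * w) ^ 2)) w := by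
    have hl : HasDerivAt (fun x : ℂ => (Real.pi : ℂ) * x) Real.pi w := by
      simpa using (hasDerivAt_id w).const_mul (Real.pi : ℂ)
    have := ((hl.ccos.div hl.csin hs).const_mul (Real.pi : ℂ))
    refine HasDerivAt.congr_deriv (f := fun x : ℂ => (Real.pi : ℂ) * Complex.cot (Real.pi * x)) this ?_
    field_simp
    have := Complex.sin_sq_add_cos_sq (Real.pi * w)
    linear_combination (-1 : ℂ) * this
  rw [hd.deriv] at h
  simp at h
  simpa using h.symm

lemma cosh_aux (x : ℝ) (hx : x ≠ 0) :
    ∑' n : ℤ, 1 / ((x : ℂ) - Complex.I * (n + 1 / 2)) ^ 2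
      = -((Real.pi : ℂ) ^ 2 / (Real.cosh (Real.pi * x) : ℂ) ^ 2) := by
  have key : ∀ x : ℝ, 0 < x → ∑' n : ℤ, 1 / ((x : ℂ) - Complex.I * (n + 1 / 2)) ^ 2
      = -((Real.pi : ℂ) ^ 2 / (Real.cosh (Real.pi * x) : ℂ) ^ 2) := by
    intro x hx
    have h := csc_aux (Complex.I * x + 1 / 2) (by simpa using hx)
    have e : Complex.sin (Real.pi * (Complex.I * x + 1 / 2)) = (Real.cosh (Real.pi * x) : ℂ) := by
      rw [show (Real.pi : ℂ) * (Complex.I * x + 1 / 2)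
        = (Real.pi * x : ℂ) * Complex.I + Real.pi / 2 by ring, Complex.sin_add_pi_div_two,
        Complex.cos_mul_I]
      push_cast
      rfl
    rw [e] at h
    rw [← h, ← tsum_neg]
    congr 1 with n
    rw [show Complex.I * x + 1 / 2 + n = Complex.I * ((x : ℂ) - Complex.I * (n + 1 / 2)) by
      ring_nf; simp; ring, mul_pow, Complex.I_sq, neg_one_mul, div_neg, neg_neg]
  rcases lt_or_gt_of_ne hx with h | h
  · have := key (-x) (by linarith)
    rw [← (Equiv.subLeft (-1 : ℤ)).tsum_eq] at this
    simp only [mul_neg, Real.cosh_neg] at this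
    rw [← this]
    congr 1 with n
    simp only [Equiv.subLeft_apply]
    push_cast
    congr 1
    ring
  · exact key x h

lemma cosh_aux_bound (z : ℂ) (hz : 0 < z.im) : ∃ C : ℝ, ∀ b : ℝ, 1 / 2 ≤ |b| → ∀ x : ℝ,
    ‖1 / ((x : ℂ) - Complex.I * b) ^ 2 / (z - x)‖
      ≤ C * (1 / |b| ^ (3 / 2 : ℝ)) * (1 + ‖x‖ ^ 2) ^ (-(3 / 2 : ℝ) / 2) := by
  set K : ℝ := 2 + (2 * ‖z‖ ^ 2 + 1) / z.im ^ 2 with hK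
  have hK0 : 0 < K := by positivity
  refine ⟨4 ^ (1 / 4 : ℝ) * K ^ (1 / 2 : ℝ), fun b hb x => ?_⟩
  have hb0 : 0 < |b| := by linarith
  have hb2 : 1 / 4 ≤ b ^ 2 := by rw [← sq_abs]; nlinarith
  have hA : ‖((x : ℂ) - Complex.I * b) ^ 2‖ = x ^ 2 + b ^ 2 := by
    rw [norm_pow, Complex.sq_norm, Complex.normSq_apply]; simp; ring
  have hy : z.im ≤ ‖z - x‖ := by
    have := Complex.abs_im_le_norm (z - x)
    simp at this
    exact (le_abs_self _).trans this
  have hD : (1 + x ^ 2) ≤ K * ‖z - x‖ ^ 2 := by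
    have h1 : |x| ≤ ‖z - x‖ + ‖z‖ := by
      have := norm_sub_norm_le (x : ℂ) z
      rw [norm_sub_rev] at this
      simp at this
      linarith
    have h2 : x ^ 2 ≤ 2 * ‖z - x‖ ^ 2 + 2 * ‖z‖ ^ 2 := by
      rw [← sq_abs x]
      nlinarith [abs_nonneg x, sq_nonneg (‖z - x‖ - ‖z‖)]
    have h3 : (2 * ‖z‖ ^ 2 + 1) ≤ (2 * ‖z‖ ^ 2 + 1) / z.im ^ 2 * ‖z - x‖ ^ 2 := by
      rw [div_mul_eq_mul_div, le_div_iff₀ (by positivity)]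
      gcongr
    rw [hK, add_mul]; linarith
  set D := ‖z - x‖ with hDdef
  have hD0 : 0 < D := by linarith
  set T := 1 + x ^ 2 with hT
  have hT0 : 0 < T := by positivity
  set A := x ^ 2 + b ^ 2 with hAd
  have hA0 : 0 < A := by positivity
  have e1 : (T / 4) ^ (1 / 4 : ℝ) * (|b| ^ (3 / 2 : ℝ)) ≤ A := by
    have : |b| ^ (3 / 2 : ℝ) = (b ^ 2) ^ (3 / 4 : ℝ) := by
      rw [← sq_abs, ← Real.rpow_natCast, ← Real.rpow_mul hb0.le]; norm_num
    rw [this]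
    calc (T / 4) ^ (1 / 4 : ℝ) * (b ^ 2) ^ (3 / 4 : ℝ) ≤ A ^ (1 / 4 : ℝ) * A ^ (3 / 4 : ℝ) := by
          gcongr
          · rw [hT, hAd]; nlinarith [sq_nonneg x]
          · rw [hAd]; nlinarith [sq_nonneg x]
      _ = A := by rw [← Real.rpow_add hA0]; norm_num
  have e2 : (T / K) ^ (1 / 2 : ℝ) ≤ D := by
    calc (T / K) ^ (1 / 2 : ℝ) ≤ (D ^ 2) ^ (1 / 2 : ℝ) := by
          gcongr
          rw [div_le_iff₀ hK0]; linarith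
      _ = D := by rw [← Real.rpow_natCast, ← Real.rpow_mul hD0.le]; norm_num
  rw [norm_div, norm_div, hA, norm_one, div_div, Real.norm_eq_abs, sq_abs, ← hT, ← hDdef]
  calc 1 / (A * D) ≤ 1 / (((T / 4) ^ (1 / 4 : ℝ) * (|b| ^ (3 / 2 : ℝ))) * (T / K) ^ (1 / 2 : ℝ)) := by
        gcongr
    _ = _ := by
        rw [Real.div_rpow hT0.le (by norm_num), Real.div_rpow hT0.le hK0.le, neg_div,
          Real.rpow_neg hT0.le,
          show (3 / 2 / 2 : ℝ) = 1 / 4 + 1 / 2 by norm_num, Real.rpow_add hT0]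
        field_simp

lemma integrable_aux (z : ℂ) (hz : 0 < z.im) (b : ℝ) (hb : 1 / 2 ≤ |b|) :
    Integrable (fun x : ℝ => 1 / ((x : ℂ) - Complex.I * b) ^ 2 / (z - x)) := by
  obtain ⟨C, hC⟩ := cosh_aux_bound z hz
  have hi : Integrable (fun x : ℝ => ((1 : ℝ) + ‖x‖ ^ 2) ^ (-(3 / 2 : ℝ) / 2)) :=
    integrable_rpow_neg_one_add_norm_sq (by simp; norm_num)
  refine (hi.const_mul _).mono' ?_ (Eventually.of_forall (hC b hb))
  exact Measurable.aestronglyMeasurable (by fun_prop)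

lemma log_split (p : ℂ) (hp : p.im ≠ 0) (x : ℝ) (hx : x ≠ 0) :
    Complex.log (x - p) = Real.log |x| + Complex.log ((x - p) / |x|) := by
  have h0 : (x : ℂ) - p ≠ 0 := fun h => hp (by simpa using congrArg Complex.im h)
  have hx' : ((|x| : ℝ) : ℂ) ≠ 0 := by simpa using hx
  rw [← Complex.log_ofReal_mul (abs_pos.2 hx) (div_ne_zero h0 hx')]
  congr 1
  field_simp

lemma tendsto_ratio_top (p : ℂ) : Tendsto (fun x : ℝ => ((x : ℂ) - p) / (|x| : ℝ)) atTop (𝓝 1) := by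
  have h : Tendsto (fun x : ℝ => (1 : ℂ) - p * ((x⁻¹ : ℝ) : ℂ)) atTop (𝓝 (1 - p * ((0 : ℝ) : ℂ))) :=
    tendsto_const_nhds.sub (tendsto_const_nhds.mul
      ((Complex.continuous_ofReal.tendsto 0).comp tendsto_inv_atTop_zero))
  simp only [Complex.ofReal_zero, mul_zero, sub_zero] at h
  refine h.congr' ?_
  filter_upwards [eventually_gt_atTop 0] with x hx
  have : (x : ℂ) ≠ 0 := by simpa using hx.ne'
  rw [abs_of_pos hx]
  push_cast
  field_simp

lemma tendsto_ratio_bot (p : ℂ) : Tendsto (fun x : ℝ => ((x : ℂ) - p) / (|x| : ℝ)) atBot (𝓝 (-1)) := by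
  have h : Tendsto (fun x : ℝ => (-1 : ℂ) + p * ((x⁻¹ : ℝ) : ℂ)) atBot (𝓝 (-1 + p * ((0 : ℝ) : ℂ))) :=
    tendsto_const_nhds.add (tendsto_const_nhds.mul
      ((Complex.continuous_ofReal.tendsto 0).comp tendsto_inv_atBot_zero))
  simp only [Complex.ofReal_zero, mul_zero, add_zero] at h
  refine h.congr' ?_
  filter_upwards [eventually_lt_atBot 0] with x hx
  have : (x : ℂ) ≠ 0 := by simpa using hx.ne
  rw [abs_of_neg hx]
  push_cast
  field_simp
  ring

lemma im_ratio (p : ℂ) (x : ℝ) : (((x : ℂ) - p) / (|x| : ℝ)).im = -p.im / |x| := by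
  rw [Complex.div_ofReal_im]; simp

lemma log_top (p : ℂ) : Tendsto (fun x : ℝ => Complex.log (((x : ℂ) - p) / (|x| : ℝ))) atTop (𝓝 0) := by
  have := (tendsto_ratio_top p).clog (by simp)
  simpa using this

lemma log_bot_pos (p : ℂ) (hp : 0 < p.im) :
    Tendsto (fun x : ℝ => Complex.log (((x : ℂ) - p) / (|x| : ℝ))) atBot (𝓝 (-(Real.pi * Complex.I))) := by
  have h := Complex.tendsto_log_nhdsWithin_im_neg_of_re_neg_of_im_zero (z := -1) (by simp) (by simp)
  simp only [norm_neg, norm_one, Real.log_one, Complex.ofReal_zero, zero_sub] at h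
  refine h.comp (tendsto_nhdsWithin_iff.2 ⟨tendsto_ratio_bot p, ?_⟩)
  filter_upwards [eventually_lt_atBot 0] with x hx
  simp only [im_ratio]
  exact div_neg_of_neg_of_pos (by linarith) (abs_pos.2 hx.ne)

lemma log_bot_neg (p : ℂ) (hp : p.im < 0) :
    Tendsto (fun x : ℝ => Complex.log (((x : ℂ) - p) / (|x| : ℝ))) atBot (𝓝 (Real.pi * Complex.I)) := by
  have h := (Complex.continuousWithinAt_log_of_re_neg_of_im_zero (z := -1) (by simp) (by simp)).tendsto
  rw [Complex.log_neg_one] at h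
  refine h.comp (tendsto_nhdsWithin_iff.2 ⟨tendsto_ratio_bot p, ?_⟩)
  filter_upwards [eventually_lt_atBot 0] with x hx
  simp only [im_ratio]
  exact div_nonneg (by linarith) (abs_nonneg x)

lemma tendsto_inv_aux (p : ℂ) (l : Filter ℝ) (hl : Tendsto (fun x : ℝ => |x|) l atTop) :
    Tendsto (fun x : ℝ => ((x : ℂ) - p)⁻¹) l (𝓝 0) := by
  apply tendsto_inv₀_cobounded.comp
  rw [← tendsto_norm_atTop_iff_cobounded]
  refine tendsto_atTop_mono (f := fun x : ℝ => |x| - ‖p‖) (fun x => ?_)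
    (tendsto_atTop_add_const_right _ _ hl)
  have := norm_sub_norm_le (x : ℂ) p
  simpa using this

lemma hasDerivAt_sub (p : ℂ) (x : ℝ) : HasDerivAt (fun x : ℝ => (x : ℂ) - p) 1 x :=
  (Complex.ofRealCLM.hasDerivAt (x := x)).sub_const p

lemma sub_ne (p : ℂ) (hp : p.im ≠ 0) (x : ℝ) : (x : ℂ) - p ≠ 0 :=
  fun h => hp (by simpa using congrArg Complex.im h)

lemma integral_general (z p : ℂ) (hz : z.im ≠ 0) (hp : p.im ≠ 0) (hne : z ≠ p)
    (hi : Integrable (fun x : ℝ => 1 / ((x : ℂ) - p) ^ 2 / (z - x))) (L M : ℂ)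
    (hL : Tendsto (fun x : ℝ => Complex.log (((x : ℂ) - p) / (|x| : ℝ))) atBot (𝓝 L))
    (hM : Tendsto (fun x : ℝ => Complex.log (((x : ℂ) - z) / (|x| : ℝ))) atBot (𝓝 M)) :
    ∫ x : ℝ, 1 / ((x : ℂ) - p) ^ 2 / (z - x) = -(L - M) / (z - p) ^ 2 := by
  have hzp : z - p ≠ 0 := sub_ne_zero.2 hne
  have hlim : ∀ (l : Filter ℝ), Tendsto (fun x : ℝ => |x|) l atTop → ∀ L M : ℂ,
      Tendsto (fun x : ℝ => Complex.log (((x : ℂ) - p) / (|x| : ℝ))) l (𝓝 L) →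
      Tendsto (fun x : ℝ => Complex.log (((x : ℂ) - z) / (|x| : ℝ))) l (𝓝 M) →
      Tendsto (fun x : ℝ => -(1 / (z - p)) * ((x : ℂ) - p)⁻¹ +
        1 / (z - p) ^ 2 * (Complex.log (x - p) - Complex.log (x - z))) l
        (𝓝 (-(1 / (z - p)) * 0 + 1 / (z - p) ^ 2 * (L - M))) := by
    intro l hl L M hL hM
    refine ((tendsto_inv_aux p l hl).const_mul _).add (Tendsto.const_mul _ ?_)
    refine (hL.sub hM).congr' ?_
    filter_upwards [hl.eventually_gt_atTop 0] with x hx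
    rw [log_split p hp x (abs_pos.1 hx), log_split z hz x (abs_pos.1 hx)]
    ring
  have := integral_of_hasDerivAt_of_tendsto
    (f' := fun x : ℝ => 1 / ((x : ℂ) - p) ^ 2 / (z - x)) ?_ hi
    (hlim atBot tendsto_abs_atBot_atTop L M hL hM)
    (hlim atTop tendsto_abs_atTop_atTop 0 0 (log_top p) (log_top z))
  · rw [this]; ring
  · intro x
    have hxp := sub_ne p hp x
    have hxz := sub_ne z hz x
    have hzx : z - x ≠ 0 := fun h => hxz (by linear_combination -h)
    have h1 := (hasDerivAt_sub p x).inv hxp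
    have h2 := (hasDerivAt_sub p x).clog_real (Or.inr (by simpa using hp))
    have h3 := (hasDerivAt_sub z x).clog_real (Or.inr (by simpa using hz))
    refine ((h1.const_mul (-(1 / (z - p)))).add ((h2.sub h3).const_mul (1 / (z - p) ^ 2))).congr_deriv ?_
    rw [show (x : ℂ) - z = -(z - x) by ring]
    have e : z - p = (x - p) + (z - x) := by ring
    field_simp
    rw [e]
    ring

lemma integral_degenerate (z : ℂ) (hz : z.im ≠ 0)
    (hi : Integrable (fun x : ℝ => 1 / ((x : ℂ) - z) ^ 2 / (z - x))) :
    ∫ x : ℝ, 1 / ((x : ℂ) - z) ^ 2 / (z - x) = 0 := by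
  have hlim : ∀ (l : Filter ℝ), Tendsto (fun x : ℝ => |x|) l atTop → 
      Tendsto (fun x : ℝ => 1 / 2 * (((x : ℂ) - z)⁻¹) ^ 2) l (𝓝 (1 / 2 * 0 ^ 2)) := by
    intro l hl
    exact ((tendsto_inv_aux z l hl).pow 2).const_mul _
  have := integral_of_hasDerivAt_of_tendsto
    (f' := fun x : ℝ => 1 / ((x : ℂ) - z) ^ 2 / (z - x)) ?_ hi
    (hlim atBot tendsto_abs_atBot_atTop) (hlim atTop tendsto_abs_atTop_atTop)
  · rw [this]; ring
  · intro x
    have hxz := sub_ne z hz x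
    have h1 := (((hasDerivAt_sub z x).inv hxz).pow 2).const_mul (1 / 2 : ℂ)
    refine h1.congr_deriv ?_
    have hzx : z - x ≠ 0 := fun h => hxz (by linear_combination -h)
    simp
    field_simp
    ring

lemma integral_pos (z : ℂ) (hz : 0 < z.im) (b : ℝ) (hb : 1 / 2 ≤ b) :
    ∫ x : ℝ, 1 / ((x : ℂ) - Complex.I * b) ^ 2 / (z - x) = 0 := by
  have hi := integrable_aux z hz b (by rw [abs_of_pos (by linarith)]; exact hb)
  have hp : 0 < (Complex.I * b).im := by simp; linarith
  by_cases h : z = Complex.I * b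
  · rw [← h] at hi ⊢
    exact integral_degenerate z hz.ne' hi
  · rw [integral_general z _ hz.ne' hp.ne' h hi _ _ (log_bot_pos _ hp) (log_bot_pos _ hz)]
    simp

lemma integral_neg' (z : ℂ) (hz : 0 < z.im) (b : ℝ) (hb : b ≤ -(1 / 2)) :
    ∫ x : ℝ, 1 / ((x : ℂ) - Complex.I * b) ^ 2 / (z - x)
      = -(2 * Real.pi * Complex.I) / (z - Complex.I * b) ^ 2 := by
  have hi := integrable_aux z hz b (by rw [abs_of_neg (by linarith)]; linarith)
  have hp : (Complex.I * b).im < 0 := by simp; linarith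
  have h : z ≠ Complex.I * b := by
    intro h; rw [h] at hz; linarith
  rw [integral_general z _ hz.ne' hp.ne h hi _ _ (log_bot_neg _ hp) (log_bot_pos _ hz)]
  ring

lemma half_abs (n : ℤ) : 1 / 2 ≤ |(n : ℝ) + 1 / 2| := by
  rcases le_or_gt 0 n with h | h
  · have : (0 : ℝ) ≤ n := by exact_mod_cast h
    exact le_trans (by linarith) (le_abs_self _)
  · have : (n : ℝ) ≤ -1 := by exact_mod_cast (by omega : n ≤ -1)
    exact le_trans (by linarith) (neg_le_abs _)

/-- For `Im z > 0`, the Cauchy transform of the logistic distribution equals the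
absolutely convergent series `∑_{n=1}^∞ i/(z + (n − 1/2)i)²` (indexed here by
`n : ℕ` via `n + 1/2 = (n+1) − 1/2`). -/
theorem logistic_cauchy_series (z : ℂ) (hz : 0 < z.im) :
    Summable (fun n : ℕ => Complex.I / (z + ((n : ℂ) + 1 / 2) * Complex.I) ^ 2) ∧
    (∫ x : ℝ, ((Real.pi / (2 * Real.cosh (Real.pi * x) ^ 2) : ℝ) : ℂ) / (z - (x : ℂ)))
      = ∑' n : ℕ, Complex.I / (z + ((n : ℂ) + 1 / 2) * Complex.I) ^ 2 := by
  have hpi : (Real.pi : ℂ) ≠ 0 := by simp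
  obtain ⟨C, hC⟩ := cosh_aux_bound z hz
  have hi : Integrable (fun x : ℝ => ((1 : ℝ) + ‖x‖ ^ 2) ^ (-(3 / 2 : ℝ) / 2)) :=
    integrable_rpow_neg_one_add_norm_sq (by simp; norm_num)
  have hsum := hasSum_integral_of_summable_integral_norm (μ := volume)
    (F := fun (n : ℤ) (x : ℝ) => 1 / ((x : ℂ) - Complex.I * ((n + 1 / 2 : ℝ) : ℂ)) ^ 2 / (z - x))
    (fun n => integrable_aux z hz _ (half_abs n)) (by
      refine Summable.of_nonneg_of_le (fun n => integral_nonneg fun x => norm_nonneg _)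
        (fun n => ?_) (((((Real.summable_one_div_int_add_rpow (1 / 2) (3 / 2)).2
          (by norm_num)).mul_left C)).mul_right
            (∫ x : ℝ, ((1 : ℝ) + ‖x‖ ^ 2) ^ (-(3 / 2 : ℝ) / 2)))
      rw [← integral_const_mul]
      exact integral_mono (integrable_aux z hz _ (half_abs n)).norm (hi.const_mul _)
        (hC _ (half_abs n)))
  have hint : ∫ x : ℝ, ∑' n : ℤ, 1 / ((x : ℂ) - Complex.I * ((n + 1 / 2 : ℝ) : ℂ)) ^ 2 / (z - x)
      = ∫ x : ℝ, (-(2 * Real.pi) : ℂ) *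
        (((Real.pi / (2 * Real.cosh (Real.pi * x) ^ 2) : ℝ) : ℂ) / (z - (x : ℂ))) := by
    apply integral_congr_ae
    filter_upwards [Measure.ae_ne volume (0 : ℝ)] with x hx
    have := cosh_aux x hx
    rw [tsum_div_const]
    push_cast at this ⊢
    rw [this]
    ring
  rw [hint, integral_const_mul] at hsum
  have h2 := (hsum.mul_left (-(2 * Real.pi) : ℂ)⁻¹).nat_add_neg_add_one
  rw [inv_mul_cancel_left₀ (by simp)] at h2
  have h3 : HasSum (fun n : ℕ => Complex.I / (z + ((n : ℂ) + 1 / 2) * Complex.I) ^ 2)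
    (∫ x : ℝ, ((Real.pi / (2 * Real.cosh (Real.pi * x) ^ 2) : ℝ) : ℂ) / (z - (x : ℂ))) := by
    refine h2.congr_fun fun n => ?_
    have hn : (0 : ℝ) ≤ n := n.cast_nonneg
    rw [integral_pos z hz _ (by push_cast; linarith), integral_neg' z hz _ (by push_cast; linarith)]
    rw [show z - Complex.I * ((((-((n : ℤ) + 1) : ℤ) : ℝ) + 1 / 2 : ℝ) : ℂ)
      = z + ((n : ℂ) + 1 / 2) * Complex.I by push_cast; ring]
    field_simp
    try ring
  exact ⟨h3.summable, h3.tsum_eq.symm⟩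
end

section
/- There exists an injective analytic map H from the upper half-plane ℂ⁺ = {z : Im z > 0} into the half-plane {w ∈ ℂ : Im w > −1/2} such that Σ_{n=1}^∞ i/(H(z) + (n − 1/2)i)² = 1/z for all z ∈ ℂ⁺. (This expresses that the reciprocal Cauchy transform of the logistic distribution has a univalent right inverse defined on all of ℂ⁺, i.e., the logistic distribution belongs to the class UI of freely infinitely divisible measures.) -/
open Complex Filter Topology ComplexConjugate

noncomputable def trigP (s : ℂ) : ℂ := ∑' n : ℕ, 1 / (s + ((n : ℂ) + 1)) ^ 2
noncomputable def trigT (s : ℂ) : ℂ := ∑' n : ℕ, 1 / (s + (n : ℂ)) ^ 2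
noncomputable def trigD (s : ℂ) : ℂ := 1 + s ^ 2 * trigP s
noncomputable def trigF (s : ℂ) : ℂ := s ^ 2 / trigD s

lemma sumu : Summable (fun n : ℕ => 4 / ((n : ℝ) + 1) ^ 2) := by
  have := (summable_nat_add_iff 1).2 (Real.summable_one_div_nat_pow.2 (one_lt_two))
  simpa [div_eq_mul_inv] using this.mul_left 4

lemma term_bound {s : ℂ} (hs : -(1/2) < s.re) (n : ℕ) :
    ‖1 / (s + ((n : ℂ) + 1)) ^ 2‖ ≤ 4 / ((n : ℝ) + 1) ^ 2 := by
  have hn : (0 : ℝ) ≤ n := n.cast_nonneg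
  have h1 : ((n : ℝ) + 1) / 2 ≤ ‖s + ((n : ℂ) + 1)‖ := by
    refine le_trans ?_ (re_le_norm _)
    simp; linarith
  rw [norm_div, norm_pow, norm_one]
  have h2 : (((n : ℝ) + 1) / 2) ^ 2 ≤ ‖s + ((n : ℂ) + 1)‖ ^ 2 := by gcongr
  calc 1 / ‖s + ((n : ℂ) + 1)‖ ^ 2 ≤ 1 / (((n : ℝ) + 1) / 2) ^ 2 := by gcongr
    _ = _ := by field_simp; norm_num

lemma summable_P {s : ℂ} (hs : -(1/2) < s.re) :
    Summable (fun n : ℕ => 1 / (s + ((n : ℂ) + 1)) ^ 2) :=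
  Summable.of_norm_bounded sumu (term_bound hs)

lemma diff_P : DifferentiableOn ℂ trigP {s : ℂ | -(1/2) < s.re} := by
  refine differentiableOn_tsum_of_summable_norm sumu (fun n => ?_)
    (isOpen_lt continuous_const continuous_re) (fun n w hw => term_bound hw n)
  intro s hs
  have : s + ((n : ℂ) + 1) ≠ 0 := by
    intro h
    have := congrArg re h
    simp at this hs
    have hn : (0 : ℝ) ≤ n := n.cast_nonneg
    linarith
  apply DifferentiableAt.differentiableWithinAt
  have h2 : (s + ((n : ℂ) + 1)) ^ 2 ≠ 0 := pow_ne_zero _ this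
  fun_prop (disch := assumption)

lemma summable_T {s : ℂ} (hs : -(1/2) < s.re) :
    Summable (fun n : ℕ => 1 / (s + (n : ℂ)) ^ 2) := by
  rw [← summable_nat_add_iff 1]
  simpa using summable_P hs

lemma T_eq {s : ℂ} (hs : -(1/2) < s.re) : trigT s = 1 / s ^ 2 + trigP s := by
  unfold trigT trigP
  rw [(summable_T hs).tsum_eq_zero_add]
  simp

lemma D_eq {s : ℂ} (hs : -(1/2) < s.re) (h0 : s ≠ 0) : trigD s = s ^ 2 * trigT s := by
  rw [T_eq hs, trigD]; field_simp

lemma re_one_div_sq (w : ℂ) : (1 / w ^ 2).re = (w.re ^ 2 - w.im ^ 2) / (normSq w) ^ 2 := by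
  rw [one_div, inv_re, map_pow]; simp [pow_two]

lemma im_one_div_sq (w : ℂ) : (1 / w ^ 2).im = - (2 * w.re * w.im) / (normSq w) ^ 2 := by
  rw [one_div, inv_im, map_pow]; simp [pow_two]; ring

lemma D_ne {s : ℂ} (hs : 0 ≤ s.re) : trigD s ≠ 0 := by
  have hs' : -(1/2) < s.re := by linarith
  have hsum := summable_P hs'
  by_cases hy : s.im = 0
  · have hP : 0 ≤ (trigP s).re := by
      rw [trigP, re_tsum hsum]
      refine tsum_nonneg fun n => ?_
      rw [re_one_div_sq]
      simp [hy]
      positivity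
    intro h
    have h1 := congrArg re h
    simp [trigD, pow_two, hy] at h1
    have := mul_nonneg (mul_self_nonneg s.re) hP
    linarith
  · intro h
    have h0 : s ≠ 0 := by rintro rfl; simp at hy
    have hP : trigP s = - (1 / s ^ 2) := by
      have : 1 + s ^ 2 * trigP s = 0 := h
      field_simp
      linear_combination this
    have h1 : 0 < ∑' n : ℕ, (-s.im) * (1 / (s + ((n : ℂ) + 1)) ^ 2).im := by
      have hpos : ∀ n : ℕ, 0 < (-s.im) * (1 / (s + ((n : ℂ) + 1)) ^ 2).im := by
        intro n
        rw [im_one_div_sq]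
        have hne : s + ((n : ℂ) + 1) ≠ 0 := by
          intro h; apply hy; simpa using congrArg im h
        have : 0 < normSq (s + ((n : ℂ) + 1)) := normSq_pos.2 hne
        have h3 : 0 < s.im ^ 2 := by positivity
        have : -s.im * (-(2 * (s + ((n : ℂ) + 1)).re * (s + ((n : ℂ) + 1)).im) / normSq (s + ((n : ℂ) + 1)) ^ 2) = 2 * (s.re + (n + 1)) * s.im ^ 2 / normSq (s + ((n : ℂ) + 1)) ^ 2 := by
          simp; ring
        rw [this]
        positivity
      refine Summable.tsum_pos ?_ (fun n => (hpos n).le) 0 (hpos 0)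
      exact ((hasSum_im hsum.hasSum).summable).mul_left _
    rw [tsum_mul_left, ← im_tsum hsum] at h1
    change 0 < -s.im * (trigP s).im at h1
    rw [hP, neg_im, im_one_div_sq] at h1
    have : -s.im * -(-(2 * s.re * s.im) / normSq s ^ 2) = - (2 * s.re * s.im ^ 2 / normSq s ^ 2) := by ring
    rw [this] at h1
    have : 0 ≤ 2 * s.re * s.im ^ 2 / normSq s ^ 2 := by positivity
    linarith

lemma diffAt_F {s : ℂ} (hs : 0 ≤ s.re) : DifferentiableAt ℂ trigF s := by
  have hs' : -(1/2) < s.re := by linarith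
  have hP : DifferentiableAt ℂ trigP s :=
    diff_P.differentiableAt ((isOpen_lt continuous_const continuous_re).mem_nhds hs')
  have hD : DifferentiableAt ℂ trigD s := by unfold trigD; fun_prop
  have := D_ne hs
  unfold trigF; fun_prop (disch := assumption)

lemma T_ne {s : ℂ} (hs : 0 ≤ s.re) (h0 : s ≠ 0) : trigT s ≠ 0 := by
  have := D_ne hs
  rw [D_eq (by linarith) h0] at this
  exact right_ne_zero_of_mul this

lemma F_eq {s : ℂ} (hs : 0 ≤ s.re) (h0 : s ≠ 0) : trigF s = 1 / trigT s := by
  have := T_ne hs h0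
  rw [trigF, D_eq (by linarith) h0]; field_simp

lemma P_conj (s : ℂ) : trigP (conj s) = conj (trigP s) := by
  rw [trigP, trigP, conj_tsum]; simp

lemma F_conj (s : ℂ) : trigF (conj s) = conj (trigF s) := by
  simp [trigF, trigD, P_conj]

lemma T_re_bdry {y : ℝ} (hy : 0 < y) : (trigT (y * I)).re ≤ 0 := by
  have hre : -(1/2) < ((y : ℂ) * I).re := by simp
  have hre' : -(1/2) < (conj ((y : ℂ) * I)).re := by simp
  have hq := EisensteinSeries.qExpansion_identity (k := 1) le_rfl ⟨y * I, by simpa using hy⟩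
  have e : ∀ n : ℕ, 1 / ((y : ℂ) * I + ((-((n : ℤ) + 1) : ℤ) : ℂ)) ^ 2
      = 1 / (conj ((y : ℂ) * I) + ((n : ℂ) + 1)) ^ 2 := by
    intro n
    congr 1
    push_cast
    simp
    ring
  have hs1 := summable_T hre
  have hs2 := summable_P hre'
  have hsplit : ∑' n : ℤ, 1 / ((y : ℂ) * I + n) ^ 2 = trigT (y * I) + trigP (conj (y * I)) := by
    have := tsum_of_nat_of_neg_add_one (f := fun n : ℤ => 1 / ((y : ℂ) * I + n) ^ 2)
      (by simpa using hs1) (by simpa only [e] using hs2)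
    rw [this]
    simp only [e]
    simp [trigT, trigP]
  simp only [one_add_one_eq_two] at hq
  change ∑' n : ℤ, 1 / ((y : ℂ) * I + n) ^ 2 = _ at hq
  rw [hsplit, P_conj] at hq
  have hr : ∑' n : ℕ, (n : ℂ) ^ 1 * cexp (2 * Real.pi * I * (y * I)) ^ n
     = ((∑' n : ℕ, (n : ℝ) * Real.exp (-(2 * Real.pi * y)) ^ n : ℝ) : ℂ) := by
    have : (2 * Real.pi * I * (y * I) : ℂ) = ((-(2 * Real.pi * y) : ℝ) : ℂ) := by
      push_cast; linear_combination (2 * Real.pi * y : ℂ) * I_mul_I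
    rw [this]
    push_cast
    simp
  change _ = _ * ∑' n : ℕ, (n : ℂ) ^ 1 * cexp (2 * Real.pi * I * (y * I)) ^ n at hq
  rw [hr] at hq
  have hc : ((-2 * Real.pi * I) ^ 2 / (Nat.factorial 1) : ℂ) = ((-(4 * Real.pi ^ 2) : ℝ) : ℂ) := by
    push_cast; simp [mul_pow]; norm_num
  rw [hc, ← ofReal_mul] at hq
  have h1 := congrArg re hq
  rw [ofReal_re, add_re, conj_re] at h1
  have h2 : (0:ℝ) ≤ ∑' n : ℕ, (n : ℝ) * Real.exp (-(2 * Real.pi * y)) ^ n :=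
    tsum_nonneg fun n => by positivity
  have h3 := congrArg re (T_eq hre)
  rw [add_re, re_one_div_sq] at h3
  have h4 : (((y : ℂ) * I).re ^ 2 - ((y : ℂ) * I).im ^ 2) / normSq ((y : ℂ) * I) ^ 2 ≤ 0 := by
    apply div_nonpos_of_nonpos_of_nonneg
    · simp; positivity
    · positivity
  have h5 : 0 ≤ 4 * Real.pi ^ 2 * ∑' n : ℕ, (n : ℝ) * Real.exp (-(2 * Real.pi * y)) ^ n := by positivity
  linarith

lemma F_re_bdry_pos {y : ℝ} (hy : 0 < y) : (trigF (y * I)).re ≤ 0 := by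
  rw [F_eq (by simp) (by simp [hy.ne']), one_div, inv_re]
  exact div_nonpos_of_nonpos_of_nonneg (T_re_bdry hy) (normSq_nonneg _)

lemma F_re_bdry (y : ℝ) : (trigF (y * I)).re ≤ 0 := by
  rcases lt_trichotomy y 0 with h | h | h
  · have := F_re_bdry_pos (y := -y) (by linarith)
    have e : (((-y : ℝ) : ℂ) * I) = conj (y * I) := by simp
    rwa [e, F_conj, conj_re] at this
  · simp [h, trigF]
  · exact F_re_bdry_pos h

lemma norm_ge1 {s : ℂ} (hs : 0 ≤ s.re) (n : ℕ) : ‖s‖ ≤ ‖s + n‖ := by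
  rw [← sq_le_sq₀ (norm_nonneg _) (norm_nonneg _), ← normSq_eq_norm_sq, ← normSq_eq_norm_sq,
    normSq_apply, normSq_apply]
  simp
  nlinarith [mul_nonneg hs (n.cast_nonneg : (0:ℝ) ≤ n), (n.cast_nonneg : (0:ℝ) ≤ n)]

lemma norm_ge2 {s : ℂ} (hs : 0 ≤ s.re) (n : ℕ) : (n : ℝ) ≤ ‖s + n‖ := by
  refine le_trans ?_ (re_le_norm _)
  simp; linarith

lemma diff_bound {s : ℂ} (hs : 0 ≤ s.re) (h1 : 1 ≤ ‖s‖) (n : ℕ) :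
    ‖1 / ((s + n) * (s + (n + 1)))‖ ≤ 4 / ((n : ℝ) + 1) ^ 2 := by
  have hn : (0 : ℝ) ≤ n := n.cast_nonneg
  have a1 : ((n : ℝ) + 1) / 2 ≤ ‖s + n‖ := by
    have := norm_ge1 hs n; have := norm_ge2 hs n; linarith
  have a2 : ((n : ℝ) + 1) / 2 ≤ ‖s + (n + 1)‖ := by
    have := norm_ge2 hs (n+1); push_cast at this; linarith
  rw [norm_div, norm_mul, norm_one]
  calc 1 / (‖s + n‖ * ‖s + (n + 1)‖) ≤ 1 / (((n : ℝ) + 1) / 2 * (((n : ℝ) + 1) / 2)) := by gcongr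
    _ = _ := by field_simp; norm_num

lemma hasSum_inv {s : ℂ} (hs : 0 ≤ s.re) (h1 : 1 ≤ ‖s‖) :
    HasSum (fun n : ℕ => 1 / ((s + n) * (s + (n + 1)))) (1 / s) := by
  have hne : ∀ n : ℕ, s + n ≠ 0 := fun n => by
    have := norm_ge1 hs n
    rw [← norm_pos_iff]; linarith
  rw [(Summable.of_norm_bounded sumu (diff_bound hs h1)).hasSum_iff_tendsto_nat]
  have e : ∀ n : ℕ, 1 / ((s + n) * (s + (n + 1))) = 1 / (s + (n : ℕ)) - 1 / (s + ((n + 1 : ℕ) : ℂ)) := by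
    intro n
    have a := hne n
    have b := hne (n + 1)
    push_cast at b ⊢
    field_simp
    ring
  simp only [e]
  simp only [Finset.sum_range_sub' (fun n : ℕ => 1 / (s + (n : ℂ)))]
  have : Tendsto (fun n : ℕ => 1 / (s + (n : ℂ))) atTop (𝓝 0) := by
    rw [tendsto_zero_iff_norm_tendsto_zero]
    refine squeeze_zero' (Eventually.of_forall fun n => norm_nonneg _) ?_ tendsto_one_div_atTop_nhds_zero_nat
    filter_upwards [eventually_gt_atTop 0] with n hn
    rw [norm_div, norm_one]
    have := norm_ge2 hs n
    have : (0:ℝ) < n := by exact_mod_cast hn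
    gcongr
  simpa using this.const_sub (1 / s)

lemma hasSum_diff {s : ℂ} (hs : 0 ≤ s.re) (h1 : 1 ≤ ‖s‖) :
    HasSum (fun n : ℕ => 1 / ((s + n) ^ 2 * (s + (n + 1)))) (trigT s - 1 / s) := by
  have hne : ∀ n : ℕ, s + n ≠ 0 := fun n => by
    have := norm_ge1 hs n
    rw [← norm_pos_iff]; linarith
  have := (summable_T (s := s) (by linarith)).hasSum.sub (hasSum_inv hs h1)
  refine this.congr_fun ?_ 
  intro n
  have a := hne n
  have b := hne (n + 1)
  push_cast at b ⊢
  field_simp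
  ring

lemma sT_tendsto : Tendsto (fun s : ℂ => s * trigT s - 1)
    (Bornology.cobounded ℂ ⊓ 𝓟 {z | 0 ≤ z.re}) (𝓝 0) := by
  have ev1 : ∀ᶠ s : ℂ in Bornology.cobounded ℂ ⊓ 𝓟 {z | 0 ≤ z.re}, 0 ≤ s.re ∧ 1 ≤ ‖s‖ := by
    refine Filter.Eventually.and ?_ ?_
    · exact mem_inf_of_right (mem_principal_self _)
    · exact mem_inf_of_left (tendsto_norm_cobounded_atTop.eventually_ge_atTop 1)
  have key : Tendsto (fun s : ℂ => ∑' n : ℕ, s * (1 / ((s + n) ^ 2 * (s + (n + 1)))))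
    (Bornology.cobounded ℂ ⊓ 𝓟 {z | 0 ≤ z.re}) (𝓝 (∑' n : ℕ, 0)) := by
    refine tendsto_tsum_of_dominated_convergence sumu ?_ ?_
    · intro n
      rw [tendsto_zero_iff_norm_tendsto_zero]
      have : Tendsto (fun s : ℂ => ‖s‖⁻¹) (Bornology.cobounded ℂ ⊓ 𝓟 {z | 0 ≤ z.re}) (𝓝 0) :=
        (tendsto_inv_atTop_zero.comp tendsto_norm_cobounded_atTop).mono_left inf_le_left
      refine squeeze_zero' (Eventually.of_forall fun n => norm_nonneg _) ?_ this
      filter_upwards [ev1] with s ⟨hs, h1⟩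
      have a := norm_ge1 hs n
      have b := norm_ge1 hs (n + 1)
      push_cast at b
      rw [norm_mul, norm_div, norm_mul, norm_pow, norm_one]
      calc ‖s‖ * (1 / (‖s + n‖ ^ 2 * ‖s + (n + 1)‖)) ≤ ‖s‖ * (1 / (‖s‖ ^ 2 * 1)) := by
            gcongr; linarith
        _ = _ := by field_simp
    · filter_upwards [ev1] with s ⟨hs, h1⟩ n
      refine le_trans ?_ (diff_bound hs h1 n)
      have a := norm_ge1 hs n
      have b := norm_ge1 hs (n + 1)
      push_cast at b
      rw [norm_mul, norm_div, norm_mul, norm_pow, norm_one, norm_div, norm_mul, norm_one]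
      calc ‖s‖ * (1 / (‖s + n‖ ^ 2 * ‖s + (n + 1)‖)) ≤ ‖s + n‖ * (1 / (‖s + n‖ ^ 2 * ‖s + (n + 1)‖)) := by
            gcongr
        _ = _ := by
            have : 0 < ‖s + n‖ := by linarith
            have : 0 < ‖s + (n + 1)‖ := by linarith
            field_simp
  rw [tsum_zero] at key
  refine key.congr' ?_
  filter_upwards [ev1] with s ⟨hs, h1⟩
  rw [tsum_mul_left, (hasSum_diff hs h1).tsum_eq]
  have : s ≠ 0 := by rw [← norm_pos_iff]; linarith
  field_simp

lemma F_asymp : ∃ R : ℝ, 1 ≤ R ∧ ∀ s : ℂ, 0 ≤ s.re → R ≤ ‖s‖ →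
    ‖s‖ ≤ 2 * ‖trigF s‖ ∧ ‖trigF s‖ ≤ 2 * ‖s‖ := by
  have h := sT_tendsto.eventually (Metric.ball_mem_nhds (0:ℂ) (show (0:ℝ) < 1/2 by norm_num))
  rw [eventually_inf_principal] at h
  obtain ⟨R, -, hR⟩ := (Filter.hasBasis_cobounded_norm (E := ℂ)).eventually_iff.1 h
  refine ⟨max R 1, le_max_right _ _, fun s hs hRs => ?_⟩
  have h1 : ‖s * trigT s - 1‖ < 1/2 := by
    simpa using hR (show R ≤ ‖s‖ from (le_max_left _ _).trans hRs) hs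
  have h1' : 1 ≤ ‖s‖ := (le_max_right _ _).trans hRs
  have h0 : s ≠ 0 := by rw [← norm_pos_iff]; linarith
  rw [F_eq hs h0, norm_div, norm_one]
  have hT : 0 < ‖trigT s‖ := norm_pos_iff.2 (T_ne hs h0)
  have a := norm_sub_norm_le (s * trigT s) 1
  have b := norm_sub_norm_le 1 (s * trigT s)
  rw [norm_sub_rev] at b
  rw [norm_one, norm_mul] at a b
  constructor
  · rw [mul_one_div, le_div_iff₀ hT]; linarith
  · rw [div_le_iff₀ hT]; nlinarith

lemma F_real {x : ℝ} (hx : 1 ≤ x) : (trigF x).re ≤ x := by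
  have hre : 0 ≤ (x : ℂ).re := by simp; linarith
  have hn : 1 ≤ ‖(x : ℂ)‖ := by simp; exact hx.trans (le_abs_self x)
  have h := hasSum_re (hasSum_diff hre hn)
  have h0 : 0 ≤ (trigT x - 1 / x).re := by
    refine h.nonneg fun n => ?_
    have : (1 / (((x : ℂ) + n) ^ 2 * (x + (n + 1))) : ℂ) = ((1 / ((x + n) ^ 2 * (x + (n + 1))) : ℝ) : ℂ) := by
      push_cast; rfl
    rw [this, ofReal_re]
    positivity
  rw [F_eq hre (by exact_mod_cast (by linarith : x ≠ 0))]
  have him : conj (trigT x) = trigT x := by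
    rw [trigT, conj_tsum]; simp
  obtain ⟨τ, hτ⟩ := conj_eq_iff_real.1 him
  rw [hτ] at h0 ⊢
  have e : ((τ : ℂ) - 1 / x).re = τ - 1 / x := by
    rw [← ofReal_one, ← ofReal_div, ← ofReal_sub, ofReal_re]
  rw [e] at h0
  have e2 : (1 / (τ : ℂ)).re = 1 / τ := by rw [← ofReal_one, ← ofReal_div, ofReal_re]
  rw [e2]
  have hx0 : 0 < x := by linarith
  have : 1 / x ≤ τ := by linarith
  exact (one_div_le (lt_of_lt_of_le (by positivity) this) hx0).2 this

lemma F_re_le {s : ℂ} (hs : 0 ≤ s.re) : (trigF s).re ≤ s.re := by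
  obtain ⟨R, hR1, hR⟩ := F_asymp
  have := PhragmenLindelof.right_half_plane_of_bounded_on_real (C := 1) (z := s)
    (f := fun z => cexp (trigF z - z)) ?_ ?_ ?_ ?_ hs
  · rw [norm_exp, Real.exp_le_one_iff, sub_re] at this
    linarith
  · apply DifferentiableOn.diffContOnCl
    rw [closure_setOf_lt_re]
    intro z hz
    have := diffAt_F (s := z) hz
    apply DifferentiableAt.differentiableWithinAt
    fun_prop
  · refine ⟨1, by norm_num, 3, ?_⟩
    apply Asymptotics.IsBigO.of_bound 1
    rw [eventually_inf_principal]
    filter_upwards [tendsto_norm_cobounded_atTop.eventually_ge_atTop R] with z hz hz0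
    rw [norm_exp, one_mul, Real.norm_eq_abs, Real.abs_exp, Real.exp_le_exp, Real.rpow_one]
    refine (re_le_norm _).trans ((norm_sub_le _ _).trans ?_)
    have := (hR z (le_of_lt hz0) hz).2
    linarith
  · refine ⟨1, ?_⟩
    rw [eventually_map]
    filter_upwards [eventually_ge_atTop 1] with x hx
    rw [norm_exp, Real.exp_le_one_iff, sub_re, ofReal_re]
    linarith [F_real hx]
  · intro y
    rw [norm_exp, Real.exp_le_one_iff, sub_re]
    have := F_re_bdry y
    simpa using this

lemma norm_cayley_le {w c : ℂ} (hw : 0 ≤ w.re) (hc : 0 ≤ c.re) : ‖w - c‖ ≤ ‖w + conj c‖ := by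
  rw [← sq_le_sq₀ (norm_nonneg _) (norm_nonneg _), ← normSq_eq_norm_sq, ← normSq_eq_norm_sq,
    normSq_apply, normSq_apply]
  simp
  nlinarith [mul_nonneg hw hc]

lemma add_conj_ne {w c : ℂ} (hw : 0 < w.re) (hc : 0 < c.re) : w + conj c ≠ 0 := by
  intro h
  have := congrArg re h
  simp at this
  linarith

lemma schwarz_pick {p : ℂ → ℂ} (hp : ∀ z : ℂ, 0 < z.re → DifferentiableAt ℂ p z)
    (hpos : ∀ z : ℂ, 0 < z.re → 0 < (p z).re) {a b : ℂ} (ha : 0 < a.re) (hb : 0 < b.re) :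
    ‖p a - p b‖ * ‖a + conj b‖ ≤ ‖a - b‖ * ‖p a + conj (p b)‖ := by
  set φ : ℂ → ℂ := fun ζ => (b + conj b * ζ) / (1 - ζ) with hφ
  have hden : ∀ ζ ∈ Metric.ball (0:ℂ) 1, 1 - ζ ≠ 0 := by
    intro ζ hζ h
    have : ζ = 1 := by linear_combination -h
    simp [this] at hζ
  have hφre : ∀ ζ ∈ Metric.ball (0:ℂ) 1, 0 < (φ ζ).re := by
    intro ζ hζ
    have hd := normSq_pos.2 (hden ζ hζ)
    have hz : normSq ζ < 1 := by
      rw [normSq_eq_norm_sq]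
      have : ‖ζ‖ < 1 := by simpa using hζ
      nlinarith [norm_nonneg ζ]
    have : (φ ζ).re = b.re * (1 - normSq ζ) / normSq (1 - ζ) := by
      rw [hφ, div_re]
      field_simp
      simp [normSq_apply]
      ring
    rw [this]
    have : 0 < 1 - normSq ζ := by linarith
    positivity
  set g : ℂ → ℂ := fun ζ => (p (φ ζ) - p b) / (p (φ ζ) + conj (p b)) with hg
  have hgd : DifferentiableOn ℂ g (Metric.ball 0 1) := by
    intro ζ hζ
    apply DifferentiableAt.differentiableWithinAt
    have h1 := hden ζ hζ
    have hφd : DifferentiableAt ℂ φ ζ := by rw [hφ]; fun_prop (disch := assumption)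
    have h2 : DifferentiableAt ℂ (fun ζ => p (φ ζ)) ζ := (hp _ (hφre ζ hζ)).comp ζ hφd
    have h3 := add_conj_ne (hpos _ (hφre ζ hζ)) (hpos b hb)
    rw [hg]
    exact (h2.sub_const _).div (h2.add_const _) h3
  have hgm : Set.MapsTo g (Metric.ball 0 1) (Metric.closedBall 0 1) := by
    intro ζ hζ
    have h3 := add_conj_ne (hpos _ (hφre ζ hζ)) (hpos b hb)
    rw [mem_closedBall_zero_iff, hg, norm_div, div_le_one (norm_pos_iff.2 h3)]
    exact norm_cayley_le (hpos _ (hφre ζ hζ)).le (hpos b hb).le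
  have hg0 : g 0 = 0 := by simp [hg, hφ]
  have hab := add_conj_ne ha hb
  set ζ := (a - b) / (a + conj b) with hζ
  have hζ1 : ‖ζ‖ < 1 := by
    rw [hζ, norm_div, div_lt_one (norm_pos_iff.2 hab)]
    rw [← sq_lt_sq₀ (norm_nonneg _) (norm_nonneg _), ← normSq_eq_norm_sq, ← normSq_eq_norm_sq,
      normSq_apply, normSq_apply]
    simp
    nlinarith [mul_pos ha hb]
  have hφζ : φ ζ = a := by
    have h1 := hden ζ (by simpa using hζ1)
    simp only [hφ]
    rw [div_eq_iff h1, hζ]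
    field_simp
    ring
  have := norm_le_norm_of_mapsTo_ball hgd hgm hg0 hζ1
  simp only [hg] at this
  rw [hφζ, hζ, norm_div, norm_div, div_le_div_iff₀ (norm_pos_iff.2 (add_conj_ne (hpos a ha) (hpos b hb))) (norm_pos_iff.2 hab)] at this
  exact this

lemma F_two_point {a b : ℂ} (ha : 0 < a.re) (hb : 0 < b.re) {ε : ℝ} (hε : 0 < ε) :
    ‖(a - b) - (trigF a - trigF b)‖ * ‖a + conj b‖ ≤
      ‖a - b‖ * ‖a + conj b - (trigF a + conj (trigF b)) + 2 * ε‖ := by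
  have := schwarz_pick (p := fun z => z - trigF z + ε)
    (fun z hz => ((differentiableAt_id.sub (diffAt_F hz.le)).add_const _))
    (fun z hz => by have := F_re_le hz.le; simp; linarith) ha hb
  convert this using 3
  · ring
  · simp; ring

lemma norm_sub_real_lt {w : ℂ} {d : ℝ} (hd : 0 < d) (hw : d ≤ w.re) : ‖w - d‖ < ‖w‖ := by
  rw [← sq_lt_sq₀ (norm_nonneg _) (norm_nonneg _), ← normSq_eq_norm_sq, ← normSq_eq_norm_sq,
      normSq_apply, normSq_apply]
  simp
  nlinarith

lemma F_inj {a b : ℂ} (ha : 0 < a.re) (hb : 0 < b.re) (hF : 0 < (trigF a).re)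
    (h : trigF a = trigF b) : a = b := by
  by_contra hne
  have h1 := F_two_point ha hb (half_pos hF)
  rw [h, sub_self, sub_zero, ← h, add_conj] at h1
  have hpos : 0 < ‖a - b‖ := norm_pos_iff.2 (sub_ne_zero.2 hne)
  have h2 := le_of_mul_le_mul_left h1 hpos
  have h3 : ‖a + conj b - ((trigF a).re : ℝ)‖ < ‖a + conj b‖ := by
    apply norm_sub_real_lt hF
    have := F_re_le ha.le
    simp; linarith
  have e : a + conj b - ((2 * (trigF a).re : ℝ) : ℂ) + 2 * (((trigF a).re / 2 : ℝ) : ℂ)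
      = a + conj b - ((trigF a).re : ℝ) := by push_cast; ring
  rw [e] at h2
  linarith

lemma F_deriv_ne {b : ℂ} (hb : 0 < b.re) (hF : 0 < (trigF b).re) : deriv trigF b ≠ 0 := by
  intro hd
  have hda : HasDerivAt trigF 0 b := by
    rw [← hd]; exact (diffAt_F hb.le).hasDerivAt
  have hslope := hasDerivAt_iff_tendsto_slope.1 hda
  have hcont : Tendsto trigF (𝓝[≠] b) (𝓝 (trigF b)) :=
    (diffAt_F hb.le).continuousAt.tendsto.mono_left nhdsWithin_le_nhds
  have hid : Tendsto (fun a : ℂ => a) (𝓝[≠] b) (𝓝 b) := nhdsWithin_le_nhds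
  have l1 : Tendsto (fun a => ‖1 - slope trigF b a‖ * ‖a + conj b‖) (𝓝[≠] b)
      (𝓝 (‖(1:ℂ) - 0‖ * ‖b + conj b‖)) :=
    ((hslope.const_sub 1).norm).mul ((hid.add_const _).norm)
  have l2 : Tendsto (fun a => ‖a + conj b - (trigF a + conj (trigF b)) + 2 * (((trigF b).re / 2 : ℝ) : ℂ)‖)
     (𝓝[≠] b) (𝓝 ‖b + conj b - (trigF b + conj (trigF b)) + 2 * (((trigF b).re / 2 : ℝ) : ℂ)‖) :=
    (((hid.add_const _).sub (hcont.add_const _)).add_const _).norm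
  have hle := le_of_tendsto_of_tendsto l1 l2 ?_
  · rw [add_conj, add_conj] at hle
    have h3 : ‖((2 * b.re : ℝ) : ℂ) - ((trigF b).re : ℝ)‖ < ‖((2 * b.re : ℝ) : ℂ)‖ := by
      apply norm_sub_real_lt hF
      have := F_re_le hb.le
      simp; linarith
    have e : ((2 * b.re : ℝ) : ℂ) - ((2 * (trigF b).re : ℝ) : ℂ) + 2 * (((trigF b).re / 2 : ℝ) : ℂ)
      = ((2 * b.re : ℝ) : ℂ) - ((trigF b).re : ℝ) := by push_cast; ring
    rw [e] at hle
    simp only [sub_zero, norm_one, one_mul] at hle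
    linarith
  · have hmem : ∀ᶠ a : ℂ in 𝓝[≠] b, 0 < a.re :=
      nhdsWithin_le_nhds ((isOpen_lt continuous_const continuous_re).mem_nhds hb)
    filter_upwards [hmem, self_mem_nhdsWithin] with a ha hne
    have h1 := F_two_point ha hb (half_pos hF)
    have hne' : a - b ≠ 0 := sub_ne_zero.2 hne
    have hpos : 0 < ‖a - b‖ := norm_pos_iff.2 hne'
    have e : (a - b) - (trigF a - trigF b) = (a - b) * (1 - slope trigF b a) := by
      rw [slope_def_field]; field_simp
    rw [e, norm_mul, mul_assoc] at h1
    exact le_of_mul_le_mul_left h1 hpos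

lemma F_strict {b : ℂ} (hb : 0 < b.re) : HasStrictDerivAt trigF (deriv trigF b) b := by
  have : DifferentiableOn ℂ trigF {z | 0 < z.re} := fun z hz =>
    (diffAt_F (le_of_lt hz)).differentiableWithinAt
  exact (this.analyticAt ((isOpen_lt continuous_const continuous_re).mem_nhds hb)).hasStrictDerivAt

lemma F_surj {t : ℂ} (ht : 0 < t.re) : ∃ s : ℂ, 0 < s.re ∧ trigF s = t := by
  set E : Set ℂ := {t | 0 < t.re ∧ ∃ s : ℂ, 0 < s.re ∧ trigF s = t} with hE
  have hopenR : IsOpen {z : ℂ | 0 < z.re} := isOpen_lt continuous_const continuous_re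
  have hopen : IsOpen E := by
    rw [isOpen_iff_mem_nhds]
    rintro t ⟨h, s, hs, rfl⟩
    have hm := (F_strict hs).map_nhds_eq (F_deriv_ne hs h)
    have h1 : {z : ℂ | ∃ s : ℂ, 0 < s.re ∧ trigF s = z} ∈ 𝓝 (trigF s) := by
      rw [← hm, mem_map]
      filter_upwards [hopenR.mem_nhds hs] with z hz
      exact ⟨z, hz, rfl⟩
    filter_upwards [hopenR.mem_nhds h, h1] with z a b
    exact ⟨a, b⟩
  have hsub : {z : ℂ | 0 < z.re} ⊆ E := by
    refine IsPreconnected.subset_of_closure_inter_subset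
      (convex_halfSpace_re_gt 0).isPreconnected hopen ?_ ?_
    · obtain ⟨R, hR1, hR⟩ := F_asymp
      have h1 : (0:ℝ) ≤ (1:ℂ).re := by simp
      refine ⟨trigF 1, ?_, ?_, 1, by simp, rfl⟩ <;>
      · have hD : 0 < (trigF 1).re := by
          have him : conj (trigF 1) = trigF 1 := by rw [← F_conj]; simp
          rw [F_eq h1 one_ne_zero]
          have hT : 0 ≤ (trigT 1).re := by
            rw [trigT, re_tsum (summable_T (by norm_num))]
            refine tsum_nonneg fun n => ?_
            rw [re_one_div_sq]
            simp
            positivity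
          have hTim : conj (trigT 1) = trigT 1 := by
            rw [trigT, conj_tsum]; simp
          have hne := T_ne h1 one_ne_zero
          obtain ⟨τ, hτ⟩ := conj_eq_iff_real.1 hTim
          rw [hτ] at hT hne ⊢
          have e2 : (1 / (τ : ℂ)).re = 1 / τ := by rw [← ofReal_one, ← ofReal_div, ofReal_re]
          rw [e2]
          have : τ ≠ 0 := by exact_mod_cast hne
          have : 0 < τ := lt_of_le_of_ne (by simpa using hT) this.symm
          positivity
        exact hD
    · rintro t ⟨htc, ht⟩
      have ht' : 0 < t.re := ht
      refine ⟨ht, ?_⟩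
      obtain ⟨R, hR1, hR⟩ := F_asymp
      set M : ℝ := max R (2 * (‖t‖ + 1)) with hM
      set K : Set ℂ := Metric.closedBall 0 M ∩ {z | t.re / 2 ≤ z.re} with hK
      have hKc : IsCompact K :=
        (isCompact_closedBall _ _).inter_right (isClosed_le continuous_const continuous_re)
      have hFc : ContinuousOn trigF K := fun z hz =>
        (diffAt_F (le_trans (by linarith) hz.2)).continuousAt.continuousWithinAt
      have hcl : IsClosed (trigF '' K) := (hKc.image_of_continuousOn hFc).isClosed
      have hmem : t ∈ closure (trigF '' K) := by
        have hU : Metric.ball t 1 ∩ {z : ℂ | t.re / 2 < z.re} ∈ 𝓝 t :=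
          inter_mem (Metric.ball_mem_nhds _ one_pos)
            ((isOpen_lt continuous_const continuous_re).mem_nhds (by simp; linarith))
        have := mem_closure_iff_frequently.1 htc
        rw [mem_closure_iff_frequently]
        refine (this.and_eventually hU).mono ?_
        rintro _ ⟨⟨h, s, hs, rfl⟩, hb, hre⟩
        refine ⟨s, ⟨?_, ?_⟩, rfl⟩
        · rw [mem_closedBall_zero_iff]
          by_contra! hcon
          have h1 := (hR s hs.le ((le_max_left _ _).trans hcon.le)).1
          have h2 : 2 * (‖t‖ + 1) < ‖s‖ := (le_max_right _ _).trans_lt hcon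
          have h3 : ‖trigF s - t‖ < 1 := by simpa [dist_eq_norm] using hb
          have h4 := norm_sub_norm_le (trigF s) t
          linarith
        · have := F_re_le hs.le
          have h5 : t.re / 2 < (trigF s).re := hre
          exact h5.le.trans this
      rw [hcl.closure_eq] at hmem
      obtain ⟨s, hs, rfl⟩ := hmem
      exact ⟨s, lt_of_lt_of_le (by linarith) hs.2, rfl⟩
  exact (hsub ht).2

theorem logistic_UI :
    ∃ H : ℂ → ℂ,
      Set.InjOn H {z : ℂ | 0 < z.im} ∧
      DifferentiableOn ℂ H {z : ℂ | 0 < z.im} ∧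
      Set.MapsTo H {z : ℂ | 0 < z.im} {w : ℂ | -(1 / 2 : ℝ) < w.im} ∧
      ∀ z : ℂ, 0 < z.im →
        (∑' n : ℕ, Complex.I / (H z + ((n : ℂ) + 1 / 2) * Complex.I) ^ 2) = 1 / z := by
  have hex : ∀ t : ℂ, ∃ s : ℂ, 0 < t.re → 0 < s.re ∧ trigF s = t := fun t => by
    by_cases ht : 0 < t.re
    · obtain ⟨s, hs⟩ := F_surj ht
      exact ⟨s, fun _ => hs⟩
    · exact ⟨0, fun h => absurd h ht⟩
  choose S hS using hex
  have hSd : ∀ t : ℂ, 0 < t.re → DifferentiableAt ℂ S t := by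
    intro t ht
    obtain ⟨hs, hf⟩ := hS t ht
    have hF : 0 < (trigF (S t)).re := by rw [hf]; exact ht
    have hc := (diffAt_F hs.le).continuousAt
    have hleft : ∀ᶠ x in 𝓝 (S t), S (trigF x) = x := by
      filter_upwards [(isOpen_lt continuous_const continuous_re).mem_nhds hs,
        hc.preimage_mem_nhds ((isOpen_lt continuous_const continuous_re).mem_nhds hF)] with x hx hx2
      have hx2' : 0 < (trigF x).re := hx2
      obtain ⟨a, b⟩ := hS (trigF x) hx2'
      exact F_inj a hx (by rw [b]; exact hx2') b
    have := ((F_strict hs).to_local_left_inverse (F_deriv_ne hs hF) hleft).hasDerivAt.differentiableAt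
    rwa [hf] at this
  have hre : ∀ z : ℂ, (-I * z).re = z.im := by intro z; simp
  have heq : ∀ z : ℂ, 0 < z.im →
        (∑' n : ℕ, Complex.I / (I * (S (-I * z) - 1/2) + ((n : ℂ) + 1 / 2) * Complex.I) ^ 2) = 1 / z := by
    intro z hz
    obtain ⟨hs, hf⟩ := hS (-I * z) (by rw [hre]; exact hz)
    have h0 : S (-I * z) ≠ 0 := by intro h; rw [h, zero_re] at hs; exact lt_irrefl _ hs
    have hz0 : z ≠ 0 := by rintro rfl; simp at hz
    have hT := T_ne hs.le h0
    rw [F_eq hs.le h0] at hf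
    have e : ∀ n : ℕ, Complex.I / (I * (S (-I * z) - 1/2) + ((n : ℂ) + 1 / 2) * Complex.I) ^ 2
        = (-I) * (1 / (S (-I * z) + n) ^ 2) := by
      intro n
      have : (I * (S (-I * z) - 1/2) + ((n : ℂ) + 1 / 2) * Complex.I) ^ 2
        = - (S (-I * z) + n) ^ 2 := by
        linear_combination (S (-I * z) + n) ^ 2 * I_sq
      rw [this, div_neg]; ring
    simp only [e]
    rw [tsum_mul_left]
    change -I * trigT (S (-I * z)) = 1 / z
    rw [div_eq_iff hT] at hf
    rw [eq_div_iff hz0]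
    linear_combination -hf
  refine ⟨fun z => I * (S (-I * z) - 1/2), ?_, ?_, ?_, heq⟩
  · intro a ha b hb hab
    have h1 := heq a ha
    have h2 := heq b hb
    simp only at hab
    rw [hab, h2] at h1
    simpa using h1.symm
  · intro z hz
    have h1 := hSd (-I * z) (by rw [hre]; exact hz)
    have h2 : DifferentiableAt ℂ (fun z => S (-I * z)) z :=
      DifferentiableAt.comp (f := fun z => -I * z) z h1 (by fun_prop)
    exact ((h2.sub_const _).const_mul _).differentiableWithinAt
  · intro z hz
    obtain ⟨hs, -⟩ := hS (-I * z) (by rw [hre]; exact hz)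
    simp only [Set.mem_setOf_eq, mul_im, I_re, I_im, sub_re, zero_mul, one_mul]
    norm_num
    simpa using hs
end

section
/- For every natural number n ≥ 0, the 2n-th moment of the rescaled logistic density equals |(2 − 2^{2n})·B_{2n}|: ∫_ℝ x^{2n} · (π/(4 cosh²(πx/2))) dx = |(2 − 2^{2n})·B_{2n}|, where B_k denotes the k-th Bernoulli number; moreover all odd moments vanish. -/
open MeasureTheory

lemma lm_density (x : ℝ) : Real.pi / (4 * Real.cosh (Real.pi * x / 2) ^ 2)
    = Real.pi * (Real.exp (-(Real.pi * x)) / (1 + Real.exp (-(Real.pi * x))) ^ 2) := by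
  have h : Real.exp (-(Real.pi * x)) = Real.exp (-(Real.pi * x / 2)) ^ 2 := by
    rw [← Real.exp_nat_mul]; congr 1; push_cast; ring
  have h2 : Real.exp (Real.pi * x / 2) = (Real.exp (-(Real.pi * x / 2)))⁻¹ := by
    rw [Real.exp_neg, inv_inv]
  rw [h, Real.cosh_eq, h2]
  have : 0 < Real.exp (-(Real.pi * x / 2)) := Real.exp_pos _
  generalize Real.exp (-(Real.pi * x / 2)) = y at *
  field_simp
  ring

lemma lm_even (n : ℕ) :
    (∫ x : ℝ, x ^ (2 * n) * (Real.pi / (4 * Real.cosh (Real.pi * x / 2) ^ 2)))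
    = 2 * ∫ x in Set.Ioi (0:ℝ), x ^ (2 * n) * (Real.pi / (4 * Real.cosh (Real.pi * x / 2) ^ 2)) := by
  rw [← integral_comp_abs (f := fun x : ℝ => x ^ (2 * n) * (Real.pi / (4 * Real.cosh (Real.pi * x / 2) ^ 2)))]
  congr 1
  ext x
  have h : Real.cosh (Real.pi * |x| / 2) = Real.cosh (Real.pi * x / 2) := by
    rw [← Real.cosh_abs (Real.pi * x / 2), abs_div, abs_mul, abs_of_pos Real.pi_pos, abs_two]
  simp only [h, pow_mul, sq_abs]

lemma lm_zero : (∫ x in Set.Ioi (0:ℝ), (Real.pi / (4 * Real.cosh (Real.pi * x / 2) ^ 2))) = 1 / 2 := by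
  have hd : ∀ x ∈ Set.Ici (0:ℝ), HasDerivAt (fun x : ℝ => (1 + Real.exp (-(Real.pi * x)))⁻¹)
      (Real.pi / (4 * Real.cosh (Real.pi * x / 2) ^ 2)) x := by
    intro x _
    have h1 : HasDerivAt (fun x : ℝ => 1 + Real.exp (-(Real.pi * x)))
        (Real.exp (-(Real.pi * x)) * (-(Real.pi * 1))) x :=
      (((hasDerivAt_id x).const_mul Real.pi).neg.exp).const_add 1
    have h2 := h1.fun_inv (by positivity)
    convert! h2 using 1
    rw [lm_density]; ring
  have ht : Filter.Tendsto (fun x : ℝ => (1 + Real.exp (-(Real.pi * x)))⁻¹) Filter.atTop (nhds ((1 + 0)⁻¹)) := by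
    refine Filter.Tendsto.inv₀ (Filter.Tendsto.const_add 1 ?_) (by norm_num)
    exact Real.tendsto_exp_neg_atTop_nhds_zero.comp (Filter.tendsto_id.const_mul_atTop Real.pi_pos)
  rw [integral_Ioi_of_hasDerivAt_of_nonneg' hd (fun x _ => by positivity) ht]
  norm_num

lemma lm_gamma (m k : ℕ) (hk : k ≠ 0) :
    IntegrableOn (fun x : ℝ => x ^ m * Real.exp (-(Real.pi * x)) ^ k) (Set.Ioi 0) ∧
    ∫ x in Set.Ioi (0:ℝ), x ^ m * Real.exp (-(Real.pi * x)) ^ k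
      = (m.factorial : ℝ) / (Real.pi * k) ^ (m + 1) := by
  have hr : 0 < Real.pi * k := by positivity
  have e : ∀ x : ℝ, Real.exp (-(Real.pi * x)) ^ k = Real.exp (-(Real.pi * k * x)) := by
    intro x
    rw [← Real.exp_nat_mul]; congr 1; ring
  have h := Real.integral_rpow_mul_exp_neg_mul_Ioi (a := (m:ℝ) + 1) (by positivity) hr
  have h' : ∫ x in Set.Ioi (0:ℝ), x ^ m * Real.exp (-(Real.pi * x)) ^ k
      = (m.factorial : ℝ) / (Real.pi * k) ^ (m + 1) := by
    simp only [add_sub_cancel_right, Real.rpow_natCast] at h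
    simp only [e]
    rw [h, Real.Gamma_nat_eq_factorial, ← Nat.cast_add_one, Real.rpow_natCast]
    rw [one_div, inv_pow, div_eq_mul_inv, mul_comm]
  refine ⟨?_, h'⟩
  by_contra hc
  rw [integral_undef hc] at h'
  have : (0:ℝ) < (m.factorial : ℝ) / (Real.pi * k) ^ (m + 1) := by positivity
  linarith

lemma lm_eta (n : ℕ) (hn : n ≠ 0) :
    HasSum (fun k : ℕ => (-1 : ℝ) ^ k * (1 / (k:ℝ) ^ (2 * n)))
      ((2 / 2 ^ (2 * n) - 1) * ((-1 : ℝ) ^ (n + 1) * 2 ^ (2 * n - 1) * Real.pi ^ (2 * n) *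
        bernoulli (2 * n) / (2 * n).factorial)) := by
  have h := hasSum_zeta_nat hn
  set Z := ((-1 : ℝ) ^ (n + 1) * 2 ^ (2 * n - 1) * Real.pi ^ (2 * n) *
        bernoulli (2 * n) / (2 * n).factorial) with hZ
  have hinj : Function.Injective (fun k : ℕ => 2 * k) := fun a b h => by
    simpa using h
  have h2 : HasSum (fun k : ℕ => if Even k then (1 / (k:ℝ) ^ (2 * n)) else 0) (1 / 2 ^ (2 * n) * Z) := by
    rw [← hinj.hasSum_iff]
    · convert! h.mul_left (1 / 2 ^ (2 * n) : ℝ) using 1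
      ext k
      simp [mul_pow, mul_comm]
    · intro k hk
      rw [if_neg]
      intro he
      exact hk (by obtain ⟨r, hr⟩ := he; exact ⟨r, by simp only; omega⟩)
  convert! (h2.mul_left 2).sub h using 1
  · ext k
    rcases Nat.even_or_odd k with hk | hk
    · simp only [hk.neg_one_pow, hk, if_true]; ring
    · simp only [hk.neg_one_pow, Nat.not_even_iff_odd.2 hk, if_false]; ring
  · ring

lemma lm_pos (n : ℕ) (hn : n ≠ 0) :
    (∫ x in Set.Ioi (0:ℝ), x ^ (2 * n) * (Real.pi / (4 * Real.cosh (Real.pi * x / 2) ^ 2)))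
    = -((2 * n).factorial / Real.pi ^ (2 * n)) * ((2 / 2 ^ (2 * n) - 1) * ((-1 : ℝ) ^ (n + 1) * 2 ^ (2 * n - 1) * Real.pi ^ (2 * n) *
        bernoulli (2 * n) / (2 * n).factorial)) := by
  let F : ℕ → ℝ → ℝ := fun k x => (-(Real.pi * k * (-1) ^ k)) * (x ^ (2 * n) * Real.exp (-(Real.pi * x)) ^ k)
  have hFi : ∀ k, Integrable (F k) (volume.restrict (Set.Ioi 0)) := by
    intro k
    rcases eq_or_ne k 0 with rfl | hk
    · simp [F]
    · exact ((lm_gamma (2 * n) k hk).1).const_mul _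
  have hFv : ∀ k, ∫ x in Set.Ioi (0:ℝ), F k x
      = -((2 * n).factorial / Real.pi ^ (2 * n)) * ((-1 : ℝ) ^ k * (1 / (k:ℝ) ^ (2 * n))) := by
    intro k
    rcases eq_or_ne k 0 with rfl | hk
    · simp [F, hn]
    · simp only [F]
      rw [integral_const_mul, (lm_gamma (2 * n) k hk).2]
      have : (k:ℝ) ≠ 0 := by exact_mod_cast hk
      have := Real.pi_ne_zero
      rw [mul_pow, pow_succ, pow_succ]
      field_simp
  have hFn : ∀ k, ∫ x in Set.Ioi (0:ℝ), ‖F k x‖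
      = ((2 * n).factorial / Real.pi ^ (2 * n)) * (1 / (k:ℝ) ^ (2 * n)) := by
    intro k
    have e : ∀ x : ℝ, ‖F k x‖ = (Real.pi * k) * (x ^ (2 * n) * Real.exp (-(Real.pi * x)) ^ k) := by
      intro x
      have : 0 ≤ x ^ (2 * n) := (even_two_mul n).pow_nonneg x
      simp only [F, Real.norm_eq_abs, abs_mul, abs_neg, abs_pow, abs_one, one_pow, mul_one,
        abs_of_pos Real.pi_pos, Nat.abs_cast, Real.abs_exp]
      rw [← abs_pow, abs_of_nonneg this]
    simp only [e]
    rcases eq_or_ne k 0 with rfl | hk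
    · simp [hn]
    · rw [integral_const_mul, (lm_gamma (2 * n) k hk).2]
      have : (k:ℝ) ≠ 0 := by exact_mod_cast hk
      have := Real.pi_ne_zero
      rw [mul_pow, pow_succ, pow_succ]
      field_simp
  have hs : Summable fun k => ∫ x in Set.Ioi (0:ℝ), ‖F k x‖ := by
    simp only [hFn]
    exact (hasSum_zeta_nat hn).summable.mul_left _
  have key := hasSum_integral_of_summable_integral_norm hFi hs
  simp only [hFv] at key
  rw [← ((lm_eta n hn).mul_left _).unique key |>.symm]
  refine setIntegral_congr_fun measurableSet_Ioi ?_
  intro x hx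
  have hx : 0 < x := hx
  have hr : ‖-Real.exp (-(Real.pi * x))‖ < 1 := by
    rw [norm_neg, Real.norm_eq_abs, Real.abs_exp, Real.exp_lt_one_iff]
    have := Real.pi_pos
    nlinarith [mul_pos this hx]
  have h := (hasSum_coe_mul_geometric_of_norm_lt_one hr).mul_left (-(Real.pi * x ^ (2 * n)))
  have h3 : (fun k : ℕ => F k x) = fun k : ℕ => -(Real.pi * x ^ (2 * n)) * (k * (-Real.exp (-(Real.pi * x))) ^ k) := by
    ext k
    simp only [F]
    rw [neg_pow (Real.exp _)]; ring
  simp only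
  rw [h3, h.tsum_eq, lm_density, sub_neg_eq_add]
  ring

/-- The `2n`-th moment of the rescaled logistic density `π/(4 cosh²(πx/2))` equals
`|(2 − 2^{2n})·B_{2n}|` where `B_k` is the `k`-th Bernoulli number; all odd moments
vanish. -/
theorem logistic_moments (n : ℕ) :
    (∫ x : ℝ, x ^ (2 * n) * (Real.pi / (4 * Real.cosh (Real.pi * x / 2) ^ 2)))
      = |((2 : ℝ) - 2 ^ (2 * n)) * ((bernoulli (2 * n) : ℚ) : ℝ)| ∧
    ∀ m : ℕ,
      (∫ x : ℝ, x ^ (2 * m + 1) * (Real.pi / (4 * Real.cosh (Real.pi * x / 2) ^ 2)))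
        = 0 := by
  constructor
  · rcases eq_or_ne n 0 with rfl | hn
    · rw [lm_even]
      simp only [mul_zero, pow_zero, one_mul]
      rw [lm_zero]
      norm_num
    · have h0 : 0 ≤ (∫ x : ℝ, x ^ (2 * n) * (Real.pi / (4 * Real.cosh (Real.pi * x / 2) ^ 2))) := by
        refine integral_nonneg fun x => ?_
        have : 0 ≤ x ^ (2 * n) := (even_two_mul n).pow_nonneg x
        simp only [Pi.zero_apply]
        positivity
      rw [← abs_of_nonneg h0, lm_even, lm_pos n hn]
      have hp : (2:ℝ) ^ (2 * n) = 2 * 2 ^ (2 * n - 1) := by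
        rw [← pow_succ']; congr 1; omega
      have e : 2 * (-((2 * n).factorial / Real.pi ^ (2 * n)) * ((2 / 2 ^ (2 * n) - 1) * ((-1 : ℝ) ^ (n + 1) * 2 ^ (2 * n - 1) * Real.pi ^ (2 * n) *
        bernoulli (2 * n) / (2 * n).factorial))) = (-1) ^ n * (((2 : ℝ) - 2 ^ (2 * n)) * ((bernoulli (2 * n) : ℚ) : ℝ)) := by
        rw [hp]
        have h1 : ((2 * n).factorial : ℝ) ≠ 0 := by positivity
        have h2 := Real.pi_ne_zero
        rw [pow_succ (-1 : ℝ) n]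
        field_simp
        try ring
      rw [e, abs_mul, abs_pow, abs_neg, abs_one, one_pow, one_mul]
  · intro m
    have h := integral_neg_eq_self (fun x : ℝ => x ^ (2 * m + 1) * (Real.pi / (4 * Real.cosh (Real.pi * x / 2) ^ 2))) volume
    have e : ∀ x : ℝ, (-x) ^ (2 * m + 1) * (Real.pi / (4 * Real.cosh (Real.pi * (-x) / 2) ^ 2))
        = -(x ^ (2 * m + 1) * (Real.pi / (4 * Real.cosh (Real.pi * x / 2) ^ 2))) := by
      intro x
      rw [Odd.neg_pow ⟨m, rfl⟩, mul_neg, neg_div, Real.cosh_neg, neg_mul]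
    simp only [e] at h
    rw [integral_neg] at h
    linarith
end
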